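/- arXiv:2405.03664 — 2 statements merged into one kernel-verified Lean document; each statement's English description precedes it below -/
import Mathlib

section
/- For any Borel probability measures μ, ν, ν' on X, any p ≥ 1, k ≥ 0 and δ ∈ (0, 1), let ν̃ = (1−δ)ν + δν'. Then RPW_{p,k}(μ, ν) − δ ≤ RPW_{p,k}(μ, ν̃) ≤ (1−δ)·RPW_{p,k}(μ, ν) + δ. -/
open MeasureTheory

noncomputable section

/-- `γ` is an `α`-partial transport plan from `μ` to `ν`: a Borel measure on `X × X` of
total mass `α` whose first marginal is dominated by `μ` and second marginal by `ν`. -/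
def IsPartialPlan {X : Type*} [MeasurableSpace X] (μ ν : Measure X) (α : ℝ)
    (γ : Measure (X × X)) : Prop :=
  γ Set.univ = ENNReal.ofReal α ∧ γ.map Prod.fst ≤ μ ∧ γ.map Prod.snd ≤ ν

/-- The cost `w_p(γ) = (∫ c(x,y)^p dγ)^(1/p)` of a transport plan. -/
def planCost {X : Type*} [MetricSpace X] [MeasurableSpace X] (p : ℝ)
    (γ : Measure (X × X)) : ℝ :=
  (∫ z, dist z.1 z.2 ^ p ∂γ) ^ (1 / p)

/-- The `α`-partial `p`-Wasserstein distance `W_{p,α}(μ, ν)`. -/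
def partialW {X : Type*} [MetricSpace X] [MeasurableSpace X] (p α : ℝ)
    (μ ν : Measure X) : ℝ :=
  sInf { c : ℝ | ∃ γ : Measure (X × X), IsPartialPlan μ ν α γ ∧ c = planCost p γ }

/-- The `(p,k)`-RPW distance: the least `ε ∈ [0,1]` with `W_{p,1-ε}(μ,ν) ≤ kε`. -/
def RPW {X : Type*} [MetricSpace X] [MeasurableSpace X] (p k : ℝ)
    (μ ν : Measure X) : ℝ :=
  sInf { ε : ℝ | ε ∈ Set.Icc (0:ℝ) 1 ∧ partialW p (1 - ε) μ ν ≤ k * ε }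


theorem rpwAux_planCost_nonneg {X : Type*} [MetricSpace X] [MeasurableSpace X] (p : ℝ)
    (γ : Measure (X × X)) : 0 ≤ planCost p γ := by
  unfold planCost
  exact Real.rpow_nonneg (integral_nonneg fun z => Real.rpow_nonneg dist_nonneg _) _

theorem rpwAux_planCost_mono {X : Type*} [MetricSpace X] [CompactSpace X] [MeasurableSpace X]
    [BorelSpace X] (hdiam : ∀ a b : X, dist a b ≤ 1) (p : ℝ) (hp : 1 ≤ p)
    (γ γ' : Measure (X × X)) [IsFiniteMeasure γ] (h : γ' ≤ γ) :
    planCost p γ' ≤ planCost p γ := by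
  unfold planCost
  have hint : Integrable (fun z : X × X => dist z.1 z.2 ^ p) γ := by
    refine Integrable.of_bound (C := 1) ?_ ?_
    · have : Measurable (fun z : X × X => dist z.1 z.2 ^ p) := by fun_prop
      exact this.aestronglyMeasurable
    · refine Filter.Eventually.of_forall fun z => ?_
      rw [Real.norm_of_nonneg (Real.rpow_nonneg dist_nonneg _)]
      exact Real.rpow_le_one dist_nonneg (hdiam _ _) (by linarith)
  refine Real.rpow_le_rpow (integral_nonneg fun z => Real.rpow_nonneg dist_nonneg _) ?_
    (by positivity)
  exact integral_mono_measure h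
    (Filter.Eventually.of_forall fun z => Real.rpow_nonneg dist_nonneg _) hint

theorem rpwAux_exists_plan {X : Type*} [MeasurableSpace X] (μ ν : Measure X)
    [IsProbabilityMeasure μ] [IsProbabilityMeasure ν] (α : ℝ) (h1 : α ≤ 1) :
    IsPartialPlan μ ν α (ENNReal.ofReal α • μ.prod ν) := by
  have hle : ENNReal.ofReal α ≤ 1 := by simpa using h1
  have key : ∀ m : Measure X, ENNReal.ofReal α • m ≤ m := fun m => by
    refine Measure.le_iff.2 fun s _ => ?_
    simpa using mul_le_mul_left hle (m s)
  refine ⟨by simp, ?_, ?_⟩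
  · rw [Measure.map_smul, Measure.map_fst_prod]; simpa using key μ
  · rw [Measure.map_smul, Measure.map_snd_prod]; simpa using key ν

theorem rpwAux_partialW_le {X : Type*} [MetricSpace X] [CompactSpace X] [MeasurableSpace X]
    [BorelSpace X] (hdiam : ∀ a b : X, dist a b ≤ 1) (p : ℝ) (hp : 1 ≤ p)
    (μ ν ν₂ : Measure X) [IsProbabilityMeasure μ] [IsProbabilityMeasure ν] (α β : ℝ) (h1 : α ≤ 1)
    (h : ∀ γ, IsPartialPlan μ ν α γ → ∃ γ', γ' ≤ γ ∧ IsPartialPlan μ ν₂ β γ') :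
    partialW p β μ ν₂ ≤ partialW p α μ ν := by
  unfold partialW
  refine le_csInf ⟨_, _, rpwAux_exists_plan μ ν α h1, rfl⟩ ?_
  rintro c ⟨γ, hγ, rfl⟩
  obtain ⟨γ', hle, hγ'⟩ := h γ hγ
  have : IsFiniteMeasure γ := ⟨by rw [hγ.1]; exact ENNReal.ofReal_lt_top⟩
  refine le_trans (csInf_le ⟨0, ?_⟩ ⟨γ', hγ', rfl⟩) (rpwAux_planCost_mono hdiam p hp γ γ' hle)
  rintro c ⟨γ, -, rfl⟩
  exact rpwAux_planCost_nonneg p γ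

theorem rpwAux_smul_le {Y : Type*} [MeasurableSpace Y] (m : Measure Y) (t : ENNReal)
    (ht : t ≤ 1) : t • m ≤ m := by
  refine Measure.le_iff.2 fun s _ => ?_
  simpa using mul_le_mul_left ht (m s)

theorem rpwAux_one_mem {X : Type*} [MetricSpace X] [MeasurableSpace X] (p k : ℝ) (hp : 1 ≤ p)
    (hk : 0 ≤ k) (μ ν : Measure X) :
    (1:ℝ) ∈ { ε : ℝ | ε ∈ Set.Icc (0:ℝ) 1 ∧ partialW p (1 - ε) μ ν ≤ k * ε } := by
  refine ⟨by simp, ?_⟩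
  have : partialW p (1 - 1) μ ν ≤ planCost p (0 : Measure (X × X)) := by
    refine csInf_le ⟨0, ?_⟩ ⟨0, ⟨by simp, ?_, ?_⟩, rfl⟩
    · rintro c ⟨γ, -, rfl⟩
      exact rpwAux_planCost_nonneg p γ
    · simpa using Measure.zero_le μ
    · simpa using Measure.zero_le ν
  refine this.trans ?_
  have h0 : p ≠ 0 := by linarith
  simp [planCost, h0, hk]

theorem rpwAux_bdd {X : Type*} [MetricSpace X] [MeasurableSpace X] (p k : ℝ)
    (μ ν : Measure X) :
    BddBelow { ε : ℝ | ε ∈ Set.Icc (0:ℝ) 1 ∧ partialW p (1 - ε) μ ν ≤ k * ε } :=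
  ⟨0, fun _ h => h.1.1⟩

theorem rpwAux_density {X : Type*} [MeasurableSpace X] (ρ m : Measure X) [IsProbabilityMeasure m]
    (hle : ρ ≤ m) : ∃ g : X → ENNReal, Measurable g ∧ (∀ x, g x ≤ 1) ∧ m.withDensity g = ρ := by
  have : IsFiniteMeasure ρ := isFiniteMeasure_of_le m hle
  have hf := Measure.rnDeriv_le_one_of_le hle
  refine ⟨fun x => min (ρ.rnDeriv m x) 1, (Measure.measurable_rnDeriv _ _).min measurable_const,
    fun x => min_le_right _ _, ?_⟩
  rw [← Measure.withDensity_rnDeriv_eq ρ m (Measure.absolutelyContinuous_of_le hle)]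
  refine withDensity_congr_ae ?_
  rw [Measure.withDensity_rnDeriv_eq ρ m (Measure.absolutelyContinuous_of_le hle)]
  filter_upwards [hf] with x hx
  exact min_eq_left hx

theorem rpwAux_restrict_plan {X : Type*} [MeasurableSpace X] (μ ν m ρ : Measure X)
    [IsProbabilityMeasure m] (hle : ρ ≤ m) (hρν : ρ ≤ ν) (δ ε : ℝ) (hδ : 0 < δ)
    (hδε : ε + δ ≤ 1) (hρ : ρ Set.univ = ENNReal.ofReal (1 - δ)) (hδ1 : δ < 1)
    (γ : Measure (X × X)) (hγ : IsPartialPlan μ m (1 - ε) γ) :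
    ∃ γ', γ' ≤ γ ∧ IsPartialPlan μ ν (1 - (ε + δ)) γ' := by
  obtain ⟨g, hg, hg1, hgm⟩ := rpwAux_density ρ m hle
  obtain ⟨hγ1, hγ2, hγ3⟩ := hγ
  have : IsFiniteMeasure γ := ⟨by rw [hγ1]; exact ENNReal.ofReal_lt_top⟩
  set γ₁ := γ.withDensity (fun z => g z.2) with hγ₁
  have hle1 : γ₁ ≤ γ := by
    have := withDensity_mono (μ := γ) (f := fun z => g z.2) (g := 1)
      (Filter.Eventually.of_forall fun z => hg1 z.2)
    simpa using this
  have hsnd : γ₁.map Prod.snd = (γ.map Prod.snd).withDensity g := by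
    ext s hs
    rw [Measure.map_apply measurable_snd hs, withDensity_apply _ (measurable_snd hs),
      withDensity_apply _ hs, setLIntegral_map hs hg measurable_snd]
  have hsndle : γ₁.map Prod.snd ≤ ρ := by
    rw [hsnd, ← hgm]
    refine Measure.le_iff.2 fun s hs => ?_
    rw [withDensity_apply _ hs, withDensity_apply _ hs]
    exact lintegral_mono' (Measure.restrict_mono le_rfl hγ3) le_rfl
  -- mass bound
  have hsum : ∀ m' : Measure X, ∫⁻ x, g x ∂m' + ∫⁻ x, (1 - g x) ∂m' = m' Set.univ := by
    intro m'
    rw [← lintegral_add_left hg]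
    simp [add_tsub_cancel_of_le (hg1 _)]
  have hm : ∫⁻ x, (1 - g x) ∂m = ENNReal.ofReal δ := by
    have h1 := hsum m
    have h2 : ∫⁻ x, g x ∂m = ENNReal.ofReal (1 - δ) := by
      rw [← hρ, ← hgm, withDensity_apply _ MeasurableSet.univ, Measure.restrict_univ]
    have h3 : ENNReal.ofReal (1 - δ) + ENNReal.ofReal δ = 1 := by
      rw [← ENNReal.ofReal_add (by linarith) hδ.le]; simp
    rw [h2, measure_univ] at h1
    exact (ENNReal.add_right_inj ENNReal.ofReal_ne_top).1 (h1.trans h3.symm)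
  have hmass : ENNReal.ofReal (1 - (ε + δ)) ≤ γ₁ Set.univ := by
    have e1 : γ₁ Set.univ = ∫⁻ x, g x ∂(γ.map Prod.snd) := by
      rw [hγ₁, withDensity_apply _ MeasurableSet.univ, Measure.restrict_univ,
        lintegral_map hg measurable_snd]
    have e2 := hsum (γ.map Prod.snd)
    rw [← e1, Measure.map_apply measurable_snd MeasurableSet.univ, Set.preimage_univ, hγ1] at e2
    have e3 : ∫⁻ x, (1 - g x) ∂(γ.map Prod.snd) ≤ ENNReal.ofReal δ := by
      rw [← hm]; exact lintegral_mono' hγ3 le_rfl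
    have e4 : ENNReal.ofReal (1 - (ε + δ)) + ENNReal.ofReal δ = ENNReal.ofReal (1 - ε) := by
      rw [← ENNReal.ofReal_add (by linarith) hδ.le]; congr 1; ring
    have e5 : ENNReal.ofReal (1 - (ε + δ)) + ENNReal.ofReal δ
        ≤ γ₁ Set.univ + ENNReal.ofReal δ := by
      rw [e4, ← e2]; gcongr
    exact (ENNReal.add_le_add_iff_right ENNReal.ofReal_ne_top).1 e5
  have : IsFiniteMeasure γ₁ := isFiniteMeasure_of_le γ hle1
  set t := ENNReal.ofReal (1 - (ε + δ)) / γ₁ Set.univ with ht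
  have ht1 : t ≤ 1 := ENNReal.div_le_of_le_mul (by simpa using hmass)
  have htle := rpwAux_smul_le γ₁ t ht1
  refine ⟨t • γ₁, htle.trans hle1, ?_, ?_, ?_⟩
  · rw [Measure.smul_apply, smul_eq_mul]
    by_cases h0 : γ₁ Set.univ = 0
    · rw [h0] at hmass ⊢
      simpa using (le_antisymm hmass zero_le).symm
    · exact ENNReal.div_mul_cancel h0 (measure_ne_top _ _)
  · exact (Measure.map_mono (htle.trans hle1) measurable_fst).trans hγ2
  · exact ((Measure.map_mono htle measurable_snd).trans hsndle).trans hρν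

/-- For Borel probability measures `μ, ν, ν'`, `p ≥ 1`, `k ≥ 0`, and
`δ ∈ (0,1)`, setting `ν̃ = (1-δ)ν + δν'`, we have
`RPW_{p,k}(μ, ν) − δ ≤ RPW_{p,k}(μ, ν̃) ≤ (1−δ)·RPW_{p,k}(μ, ν) + δ`. -/
theorem rpw_outlier_robustness
    {X : Type*} [MetricSpace X] [CompactSpace X] [MeasurableSpace X] [BorelSpace X]
    (hdiam : ∀ a b : X, dist a b ≤ 1)
    (μ ν ν' : Measure X)
    [IsProbabilityMeasure μ] [IsProbabilityMeasure ν] [IsProbabilityMeasure ν']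
    (p k : ℝ) (hp : 1 ≤ p) (hk : 0 ≤ k)
    (δ : ℝ) (hδ : δ ∈ Set.Ioo (0:ℝ) 1) :
    RPW p k μ ν - δ ≤ RPW p k μ (ENNReal.ofReal (1 - δ) • ν + ENNReal.ofReal δ • ν') ∧
    RPW p k μ (ENNReal.ofReal (1 - δ) • ν + ENNReal.ofReal δ • ν') ≤
      (1 - δ) * RPW p k μ ν + δ := by
  obtain ⟨hδ0, hδ1⟩ := hδ
  set m := ENNReal.ofReal (1 - δ) • ν + ENNReal.ofReal δ • ν' with hm
  have : IsProbabilityMeasure m := ⟨by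
    simp only [hm, Measure.add_apply, Measure.smul_apply, measure_univ, smul_eq_mul, mul_one]
    rw [← ENNReal.ofReal_add (by linarith) hδ0.le]; simp⟩
  have hρm : ENNReal.ofReal (1 - δ) • ν ≤ m := Measure.le_add_right le_rfl
  have hδle : ENNReal.ofReal (1 - δ) ≤ 1 := by
    rw [← ENNReal.ofReal_one]; exact ENNReal.ofReal_le_ofReal (by linarith)
  constructor
  · refine le_csInf ⟨1, rpwAux_one_mem p k hp hk μ m⟩ ?_
    rintro ε ⟨⟨hε0, hε1⟩, hε⟩
    rw [sub_le_iff_le_add]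
    by_cases h : ε + δ ≤ 1
    · refine csInf_le (rpwAux_bdd p k μ ν) ⟨⟨by linarith, h⟩, ?_⟩
      have := rpwAux_partialW_le hdiam p hp μ m ν (1 - ε) (1 - (ε + δ)) (by linarith)
        (fun γ hγ => rpwAux_restrict_plan μ ν m _ hρm (rpwAux_smul_le ν _ hδle) δ ε hδ0 h
          (by simp) hδ1 γ hγ)
      nlinarith
    · exact (csInf_le (rpwAux_bdd p k μ ν) (rpwAux_one_mem p k hp hk μ ν)).trans (by linarith)
  · have h1δ : 0 < 1 - δ := by linarith
    rw [← sub_le_iff_le_add, mul_comm, ← div_le_iff₀ h1δ]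
    refine le_csInf ⟨1, rpwAux_one_mem p k hp hk μ ν⟩ ?_
    rintro ε ⟨⟨hε0, hε1⟩, hε⟩
    rw [div_le_iff₀ h1δ, sub_le_iff_le_add]
    refine csInf_le (rpwAux_bdd p k μ m) ⟨⟨by nlinarith, by nlinarith⟩, ?_⟩
    have := rpwAux_partialW_le hdiam p hp μ ν m (1 - ε) (1 - (ε * (1 - δ) + δ)) (by linarith)
      (fun γ hγ => by
        have hle := rpwAux_smul_le γ _ hδle
        refine ⟨ENNReal.ofReal (1 - δ) • γ, hle, ?_, ?_, ?_⟩
        · rw [Measure.smul_apply, smul_eq_mul, hγ.1, ← ENNReal.ofReal_mul h1δ.le]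
          congr 1; ring
        · exact (Measure.map_mono hle measurable_fst).trans hγ.2.1
        · rw [Measure.map_smul]
          refine le_trans ?_ hρm
          refine Measure.le_iff.2 fun s _ => ?_
          simp only [Measure.smul_apply, smul_eq_mul]
          exact mul_le_mul_right (hγ.2.2 s) _)
    have h2 : k * ε ≤ k * (ε * (1 - δ) + δ) :=
      mul_le_mul_of_nonneg_left (by nlinarith) hk
    linarith
end
end

section
/- For any Borel probability measures μ and ν on X and any p ≥ 1, the (p,0)-RPW distance equals the total variation distance: RPW_{p,0}(μ, ν) = ‖μ − ν‖_TV. -/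
open MeasureTheory

noncomputable section

/-- The total variation distance `‖μ − ν‖_TV = sup { |μ(A) − ν(A)| : A Borel }`. -/
def TVdist {X : Type*} [MeasurableSpace X] (μ ν : Measure X) : ℝ :=
  sSup { r : ℝ | ∃ A : Set X, MeasurableSet A ∧ r = |(μ A).toReal - (ν A).toReal| }

theorem rpwaux_bddBelow {X : Type*} [MetricSpace X] [MeasurableSpace X] (p α : ℝ)
    (μ ν : Measure X) :
    BddBelow { c : ℝ | ∃ γ : Measure (X × X), IsPartialPlan μ ν α γ ∧ c = planCost p γ } := by
  refine ⟨0, ?_⟩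
  rintro c ⟨γ, -, rfl⟩
  exact Real.rpow_nonneg (integral_nonneg fun z => Real.rpow_nonneg dist_nonneg _) _

theorem rpwaux_mem {X : Type*} [MetricSpace X] [CompactSpace X] [MeasurableSpace X] [BorelSpace X]
    (μ ν : Measure X) [IsProbabilityMeasure μ] [IsProbabilityMeasure ν]
    (p : ℝ) (hp : 1 ≤ p) (S : Set X) (hS : IsHahnDecomposition μ ν S) :
    partialW p (1 - (ν.real S - μ.real S)) μ ν ≤ 0 := by
  have hm := hS.measurableSet
  set l : Measure X := μ.restrict S + ν.restrict Sᶜ with hl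
  have hd : Measurable (fun x : X => (x, x)) := by fun_prop
  refine csInf_le (rpwaux_bddBelow _ _ _ _) ⟨l.map (fun x => (x, x)), ⟨?_, ?_, ?_⟩, ?_⟩
  · rw [Measure.map_apply hd MeasurableSet.univ, hl]
    have h1 : μ S = ENNReal.ofReal (μ.real S) := by simp
    have h2 : ν Sᶜ = ENNReal.ofReal (1 - ν.real S) := by
      rw [← probReal_compl_eq_one_sub hm]; simp
    simp only [Set.preimage_univ, Measure.add_apply, Measure.restrict_apply_univ]
    rw [h1, h2, ← ENNReal.ofReal_add (by positivity) (by simp [measureReal_le_one])]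
    congr 1; ring
  · rw [Measure.map_map measurable_fst hd]
    have : (Prod.fst ∘ fun x : X => (x, x)) = id := rfl
    rw [this, Measure.map_id, hl]
    calc _ ≤ μ.restrict S + μ.restrict Sᶜ := add_le_add le_rfl hS.ge_on_compl
      _ = μ := Measure.restrict_add_restrict_compl hm
  · rw [Measure.map_map measurable_snd hd]
    have : (Prod.snd ∘ fun x : X => (x, x)) = id := rfl
    rw [this, Measure.map_id, hl]
    calc _ ≤ ν.restrict S + ν.restrict Sᶜ := add_le_add hS.le_on le_rfl
      _ = ν := Measure.restrict_add_restrict_compl hm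
  · have hp0 : p ≠ 0 := by linarith
    unfold planCost
    rw [integral_map hd.aemeasurable]
    · simp [Real.zero_rpow hp0, Real.zero_rpow (inv_ne_zero hp0)]
    · exact ((measurable_fst.dist measurable_snd).pow_const p).aestronglyMeasurable

theorem rpwaux_exists {X : Type*} [MetricSpace X] [MeasurableSpace X]
    (μ ν : Measure X) [IsProbabilityMeasure μ] [IsProbabilityMeasure ν]
    (p : ℝ) (hp : 1 ≤ p) (ε : ℝ) (h0 : 0 ≤ ε) (h1 : ε ≤ 1)
    (h : partialW p (1 - ε) μ ν ≤ 0) (θ : ℝ) (hθ : 0 < θ) :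
    ∃ γ : Measure (X × X), IsPartialPlan μ ν (1 - ε) γ ∧ ∫ z, dist z.1 z.2 ^ p ∂γ < θ := by
  have hne : { c : ℝ | ∃ γ : Measure (X × X), IsPartialPlan μ ν (1 - ε) γ ∧
      c = planCost p γ }.Nonempty := by
    refine ⟨_, ENNReal.ofReal (1 - ε) • μ.prod ν, ⟨by simp, ?_, ?_⟩, rfl⟩
    · rw [Measure.map_smul, Measure.map_fst_prod]
      simp only [measure_univ, one_smul]
      intro s
      simp only [Measure.smul_apply, smul_eq_mul]
      exact mul_le_of_le_one_left' (by simpa using h0)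
    · rw [Measure.map_smul, Measure.map_snd_prod]
      simp only [measure_univ, one_smul]
      intro s
      simp only [Measure.smul_apply, smul_eq_mul]
      exact mul_le_of_le_one_left' (by simpa using h0)
  have hlt : partialW p (1 - ε) μ ν < θ ^ (1 / p) := h.trans_lt (by positivity)
  obtain ⟨c, ⟨γ, hγ, rfl⟩, hc⟩ := exists_lt_of_csInf_lt hne hlt
  refine ⟨γ, hγ, ?_⟩
  exact (Real.rpow_lt_rpow_iff
    (integral_nonneg fun z => Real.rpow_nonneg dist_nonneg _) hθ.le (by positivity)).1 hc

theorem rpwaux_thick {X : Type*} [MetricSpace X] [CompactSpace X] [MeasurableSpace X]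
    [BorelSpace X]
    (hdiam : ∀ a b : X, dist a b ≤ 1)
    (μ ν : Measure X) [IsProbabilityMeasure μ] [IsProbabilityMeasure ν]
    (p : ℝ) (hp : 1 ≤ p) (ε : ℝ) (h1 : ε ≤ 1)
    (γ : Measure (X × X)) (hγ : IsPartialPlan μ ν (1 - ε) γ) (t : ℝ) (ht : 0 < t)
    (K : Set X) (hK : MeasurableSet K) :
    μ.real K ≤ ν.real (Metric.cthickening t K) + ε + (∫ z, dist z.1 z.2 ^ p ∂γ) / t ^ p := by
  obtain ⟨g1, g2, g3⟩ := hγ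
  have hfin : IsFiniteMeasure γ := ⟨by rw [g1]; exact ENNReal.ofReal_lt_top⟩
  have hmeas : Measurable (fun z : X × X => dist z.1 z.2 ^ p) :=
    (measurable_fst.dist measurable_snd).pow_const p
  have hint : Integrable (fun z : X × X => dist z.1 z.2 ^ p) γ := by
    refine Integrable.of_bound hmeas.aestronglyMeasurable 1 (.of_forall fun z => ?_)
    rw [Real.norm_of_nonneg (Real.rpow_nonneg dist_nonneg _)]
    exact Real.rpow_le_one dist_nonneg (hdiam _ _) (by linarith)
  have markov := mul_meas_ge_le_integral_of_nonneg (μ := γ)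
    (.of_forall fun z : X × X => Real.rpow_nonneg (dist_nonneg (x := z.1) (y := z.2)) p) hint (t ^ p)
  have htp : 0 < t ^ p := Real.rpow_pos_of_pos ht p
  have hM : γ.real {z : X × X | t ^ p ≤ dist z.1 z.2 ^ p} ≤
      (∫ z, dist z.1 z.2 ^ p ∂γ) / t ^ p := by
    rw [le_div_iff₀ htp, mul_comm]; exact markov
  have hT : MeasurableSet (Metric.cthickening t K) := Metric.isClosed_cthickening.measurableSet
  have hA : γ.real (Prod.snd ⁻¹' (Metric.cthickening t K)) ≤ ν.real (Metric.cthickening t K) := by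
    refine ENNReal.toReal_mono (measure_ne_top _ _) ?_
    rw [← Measure.map_apply measurable_snd hT]; exact g3 _
  have hB : γ.real (Prod.fst ⁻¹' Kᶜ) ≤ μ.real Kᶜ := by
    refine ENNReal.toReal_mono (measure_ne_top _ _) ?_
    rw [← Measure.map_apply measurable_fst hK.compl]; exact g2 _
  have hU : γ.real Set.univ = 1 - ε := by
    rw [Measure.real, g1, ENNReal.toReal_ofReal (by linarith)]
  rw [probReal_compl_eq_one_sub hK] at hB
  have hcov : (Set.univ : Set (X × X)) ⊆ (Prod.fst ⁻¹' Kᶜ) ∪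
      ((Prod.snd ⁻¹' (Metric.cthickening t K)) ∪ {z : X × X | t ^ p ≤ dist z.1 z.2 ^ p}) := by
    rintro ⟨x, y⟩ -
    by_cases hx : x ∈ K
    · right
      rcases le_total t (dist x y) with h | h
      · right; exact Real.rpow_le_rpow ht.le h (by linarith)
      · left; exact Metric.mem_cthickening_of_dist_le y x t K hx (by rwa [dist_comm])
    · left; exact hx
  have e1 := measureReal_mono (μ := γ) hcov (measure_ne_top _ _)
  have e2 := measureReal_union_le (μ := γ) (Prod.fst ⁻¹' Kᶜ)
    ((Prod.snd ⁻¹' (Metric.cthickening t K)) ∪ {z : X × X | t ^ p ≤ dist z.1 z.2 ^ p})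
  have e3 := measureReal_union_le (μ := γ) (Prod.snd ⁻¹' (Metric.cthickening t K))
    {z : X × X | t ^ p ≤ dist z.1 z.2 ^ p}
  linarith

theorem rpwaux_le {X : Type*} [MetricSpace X] [CompactSpace X] [MeasurableSpace X]
    [BorelSpace X]
    (hdiam : ∀ a b : X, dist a b ≤ 1)
    (μ ν : Measure X) [IsProbabilityMeasure μ] [IsProbabilityMeasure ν]
    (p : ℝ) (hp : 1 ≤ p) (ε : ℝ) (h0 : 0 ≤ ε) (h1 : ε ≤ 1)
    (h : partialW p (1 - ε) μ ν ≤ 0) (A : Set X) (hA : MeasurableSet A) :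
    μ.real A ≤ ν.real A + ε := by
  have hclosed : ∀ K : Set X, IsClosed K → μ.real K ≤ ν.real K + ε := by
    intro K hK
    have hthick : ∀ t : ℝ, 0 < t → μ.real K ≤ ν.real (Metric.cthickening t K) + ε := by
      intro t ht
      refine le_of_forall_pos_le_add fun η hη => ?_
      have htp : 0 < t ^ p := Real.rpow_pos_of_pos ht p
      obtain ⟨γ, hγ, hlt⟩ := rpwaux_exists μ ν p hp ε h0 h1 h (η * t ^ p) (by positivity)
      have := rpwaux_thick hdiam μ ν p hp ε h1 γ hγ t ht K hK.measurableSet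
      have h2 : (∫ z, dist z.1 z.2 ^ p ∂γ) / t ^ p ≤ η := by
        rw [div_le_iff₀ htp]; exact hlt.le
      linarith
    have hlim := tendsto_measure_cthickening_of_isClosed (μ := ν) (s := K)
      ⟨1, one_pos, measure_ne_top _ _⟩ hK
    have hlim2 := ((ENNReal.tendsto_toReal (measure_ne_top ν K)).comp hlim).add_const ε
    refine ge_of_tendsto (hlim2.mono_left (nhdsWithin_le_nhds (s := Set.Ioi 0))) ?_
    filter_upwards [self_mem_nhdsWithin] with t ht
    exact hthick t ht
  refine le_of_forall_pos_le_add fun η hη => ?_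
  obtain ⟨K, hKA, hK, hlt⟩ := hA.exists_isClosed_lt_add (μ := μ) (measure_ne_top _ _)
    (ε := ENNReal.ofReal η) (by simpa using hη)
  have e1 : μ.real A ≤ μ.real K + η := by
    have := ENNReal.toReal_mono (by finiteness) hlt.le
    rwa [ENNReal.toReal_add (measure_ne_top _ _) (by finiteness),
      ENNReal.toReal_ofReal hη.le] at this
  have e2 := hclosed K hK
  have e3 := measureReal_mono (μ := ν) hKA (measure_ne_top _ _)
  linarith

/-- For any Borel probability measures `μ, ν` and `p ≥ 1`, the
`(p,0)`-RPW distance equals the total variation distance. -/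
theorem rpw_zero_eq_tv
    {X : Type*} [MetricSpace X] [CompactSpace X] [MeasurableSpace X] [BorelSpace X]
    (hdiam : ∀ a b : X, dist a b ≤ 1)
    (μ ν : Measure X) [IsProbabilityMeasure μ] [IsProbabilityMeasure ν]
    (p : ℝ) (hp : 1 ≤ p) :
    RPW p 0 μ ν = TVdist μ ν := by
  have hbdd : BddAbove { r : ℝ | ∃ A : Set X, MeasurableSet A ∧
      r = |(μ A).toReal - (ν A).toReal| } := by
    refine ⟨1, ?_⟩
    rintro r ⟨A, hA, rfl⟩
    change |μ.real A - ν.real A| ≤ 1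
    have a1 := measureReal_le_one (μ := μ) (s := A)
    have a2 := measureReal_le_one (μ := ν) (s := A)
    have a3 := measureReal_nonneg (μ := μ) (s := A)
    have a4 := measureReal_nonneg (μ := ν) (s := A)
    rw [abs_le]; constructor <;> linarith
  obtain ⟨S, hS⟩ := exists_isHahnDecomposition μ ν
  have hle : μ.real S ≤ ν.real S := by
    refine ENNReal.toReal_mono (measure_ne_top _ _) ?_
    simpa using hS.le_on Set.univ
  have hmem : (ν.real S - μ.real S) ∈
      { ε : ℝ | ε ∈ Set.Icc (0:ℝ) 1 ∧ partialW p (1 - ε) μ ν ≤ 0 * ε } := by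
    refine ⟨⟨by linarith, ?_⟩, ?_⟩
    · have a2 := measureReal_le_one (μ := ν) (s := S)
      have a3 := measureReal_nonneg (μ := μ) (s := S)
      linarith
    · rw [zero_mul]; exact rpwaux_mem μ ν p hp S hS
  apply le_antisymm
  · calc RPW p 0 μ ν ≤ ν.real S - μ.real S := csInf_le ⟨0, fun ε h => h.1.1⟩ hmem
      _ ≤ |μ.real S - ν.real S| := by rw [abs_sub_comm]; exact le_abs_self _
      _ ≤ TVdist μ ν := le_csSup hbdd ⟨S, hS.measurableSet, rfl⟩
  · refine le_csInf ⟨_, hmem⟩ ?_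
    rintro ε ⟨⟨h0, h1⟩, h⟩
    rw [zero_mul] at h
    refine csSup_le ⟨_, ∅, MeasurableSet.empty, rfl⟩ ?_
    rintro r ⟨A, hA, rfl⟩
    change |μ.real A - ν.real A| ≤ ε
    have b1 := rpwaux_le hdiam μ ν p hp ε h0 h1 h A hA
    have b2 := rpwaux_le hdiam μ ν p hp ε h0 h1 h Aᶜ hA.compl
    rw [probReal_compl_eq_one_sub hA, probReal_compl_eq_one_sub hA] at b2
    rw [abs_le]; constructor <;> linarith
end
end
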